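/- Let s ≥ 1, let λ be a partition of n satisfying the s-step condition, and let μ < λ be another partition of n in the dominance order. If there exists a column index c with μ̂_c > λ̂_c + 1, or a row index r with μ_r > λ_r + 1, then the strict inequality s · r(λ, μ) > c(λ, μ) + q(λ, μ) holds. -/

import Mathlib

/-!
Write `x i = l i - m i` and `X k = x 0 + ⋯ + x (k - 1)`, so that dominance says `X k ≥ 0`, and
`X n = 0`. Let `g i = s * i + l i`; the `s`-step condition says exactly that `g` is nondecreasing.

Counting cells of the Young diagram by rows and by columns gives `∑ⱼ C(l̂ⱼ + 1, 2) = ∑ᵢ (i + 1) lᵢ`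
(`sum_dualPart`), hence `rdiff = -∑ (i + 1) xᵢ`. Expanding the binomials in `cdiff` and using
`∑ xᵢ = 0`,
`2 (s * rdiff - cdiff) - ∑ |xᵢ| = -2 ∑ xᵢ gᵢ + ∑ (xᵢ² - |xᵢ|)`,
and summation by parts (`sum_by_parts`) turns the first sum into `2 ∑ X (i + 1) (g (i + 1) - g i)`.
Since `2 * qdiff ≤ ∑ |xᵢ|`, it remains to see that the right-hand side is positive.
All its terms are nonnegative. If `m r > l r + 1` the term `x r ² - |x r|` is positive.
If column `c` of `m` is longer than that of `l` by at least two, let `r` and `r + 1` be the first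
two rows it gains: either one of them gains at least two cells, which is the previous case, or
`l r = l (r + 1) = c`, so `g (r + 1) - g r = s > 0`, while
`X (r + 1) = X (r + 2) - x (r + 1) ≥ 1`.
-/

/-- `l` is a partition of `n`, written as a nonincreasing sequence of
nonnegative integers padded with trailing zeros. -/
def IsPartitionOf (n : ℕ) (l : ℕ → ℕ) : Prop :=
  Antitone l ∧ (∀ i, n ≤ i → l i = 0) ∧ ∑ i ∈ Finset.range n, l i = n

/-- Dominance order on partitions: `l` dominates `m` iff every partial sum of `l`
is at least the corresponding partial sum of `m`. -/
def Dominates (l m : ℕ → ℕ) : Prop :=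
  ∀ j, ∑ i ∈ Finset.range j, m i ≤ ∑ i ∈ Finset.range j, l i

/-- The `(c+1)`-st part (0-indexed `c`) of the dual partition of `l`:
the number of indices `i` with `l i ≥ c + 1`. -/
def dualPart (n : ℕ) (l : ℕ → ℕ) (c : ℕ) : ℕ :=
  ((Finset.range n).filter fun i => c + 1 ≤ l i).card

/-- `q(λ, μ) = (1/2) Σ_i |λ_i − μ_i|`. -/
def qdiff (n : ℕ) (l m : ℕ → ℕ) : ℕ :=
  (∑ i ∈ Finset.range n, ((l i : ℤ) - (m i : ℤ)).natAbs) / 2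

/-- `c(λ, μ) = Σ_i C(λ_i + 1, 2) − Σ_i C(μ_i + 1, 2)`. -/
def cdiff (n : ℕ) (l m : ℕ → ℕ) : ℤ :=
  (∑ i ∈ Finset.range n, ((l i + 1).choose 2 : ℤ)) -
    ∑ i ∈ Finset.range n, ((m i + 1).choose 2 : ℤ)

/-- `r(λ, μ) = Σ_j C(μ̂_j + 1, 2) − Σ_j C(λ̂_j + 1, 2)`. -/
def rdiff (n : ℕ) (l m : ℕ → ℕ) : ℤ :=
  (∑ j ∈ Finset.range n, ((dualPart n m j + 1).choose 2 : ℤ)) -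
    ∑ j ∈ Finset.range n, ((dualPart n l j + 1).choose 2 : ℤ)

/-- The cells of column `c` of a Young diagram occupy an initial segment of rows. -/
lemma lt_dualPart_iff {n : ℕ} {l : ℕ → ℕ} (hl : IsPartitionOf n l) (c i : ℕ) :
    i < dualPart n l c ↔ c + 1 ≤ l i := by
  obtain ⟨hanti, hzero, -⟩ := hl
  unfold dualPart
  constructor
  · intro h
    by_contra hc
    have hsub : ((Finset.range n).filter fun i => c + 1 ≤ l i) ⊆ Finset.range i := by
      intro j hj
      rw [Finset.mem_filter] at hj
      rw [Finset.mem_range]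
      by_contra hij
      have := hanti (not_lt.mp hij)
      omega
    have := Finset.card_le_card hsub
    rw [Finset.card_range] at this
    omega
  · intro h
    have hsub : Finset.range (i + 1) ⊆ ((Finset.range n).filter fun i => c + 1 ≤ l i) := by
      intro j hj
      rw [Finset.mem_range] at hj
      rw [Finset.mem_filter, Finset.mem_range]
      have hj' : l i ≤ l j := hanti (by omega)
      refine ⟨?_, by omega⟩
      by_contra hn
      have := hzero j (by omega)
      omega
    have := Finset.card_le_card hsub
    rw [Finset.card_range] at this
    omega

lemma choose_succ_two_eq_sum (k : ℕ) :
    (k + 1).choose 2 = ∑ i ∈ Finset.range k, (i + 1) := by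
  induction k with
  | zero => rfl
  | succ k ih =>
    rw [Finset.sum_range_succ, ← ih, Nat.choose_succ_succ' (k + 1) 1, Nat.choose_one_right,
      add_comm]

/-- Summing the row index over all cells of the diagram, column by column or row by row. -/
lemma sum_dualPart {n : ℕ} {l : ℕ → ℕ} (hl : IsPartitionOf n l) :
    ∑ j ∈ Finset.range n, (dualPart n l j + 1).choose 2 =
      ∑ i ∈ Finset.range n, (i + 1) * l i := by
  have h1 : ∀ j, (dualPart n l j + 1).choose 2 =
      ∑ i ∈ Finset.range n, if j < l i then i + 1 else 0 := by
    intro j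
    rw [choose_succ_two_eq_sum, ← Finset.sum_filter]
    refine Finset.sum_congr ?_ fun _ _ => rfl
    ext i
    rw [Finset.mem_range, lt_dualPart_iff hl, Finset.mem_filter, Finset.mem_range]
    refine ⟨fun h => ⟨?_, h⟩, fun h => h.2⟩
    by_contra hn
    have := hl.2.1 i (by omega)
    omega
  simp_rw [h1]
  rw [Finset.sum_comm]
  refine Finset.sum_congr rfl fun i hi => ?_
  have hle : l i ≤ n := by
    calc l i ≤ ∑ i ∈ Finset.range n, l i :=
          Finset.single_le_sum (f := l) (fun _ _ => Nat.zero_le _) hi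
      _ = n := hl.2.2
  have h2 : (Finset.range n).filter (fun j => j < l i) = Finset.range (l i) := by
    ext j
    simp only [Finset.mem_filter, Finset.mem_range]
    omega
  rw [← Finset.sum_filter, h2, Finset.sum_const, Finset.card_range, smul_eq_mul, mul_comm]

lemma sum_by_parts (x g : ℕ → ℤ) (k : ℕ) :
    ∑ i ∈ Finset.range k, x i * g i +
      ∑ i ∈ Finset.range k, (∑ j ∈ Finset.range (i + 1), x j) * (g (i + 1) - g i) =
      (∑ j ∈ Finset.range k, x j) * g k := by
  induction k with
  | zero => simp
  | succ k ih =>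
    rw [Finset.sum_range_succ (fun i => x i * g i), Finset.sum_range_succ
      (fun i => (∑ j ∈ Finset.range (i + 1), x j) * (g (i + 1) - g i))]
    rw [Finset.sum_range_succ x k]
    linear_combination ih

lemma two_mul_choose_succ_two (a : ℕ) :
    2 * ((a + 1).choose 2 : ℤ) = (a : ℤ) * (a + 1) := by
  induction a with
  | zero => simp
  | succ a ih =>
    rw [Nat.choose_succ_succ' (a + 1) 1, Nat.choose_one_right]
    push_cast
    linarith

lemma abs_le_sq_int (x : ℤ) : |x| ≤ x ^ 2 := by
  rw [← sq_abs, sq]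
  rcases (abs_nonneg x).eq_or_lt with h | h
  · rw [← h]; simp
  · nlinarith

/-- If `λ` satisfies the `s`-step condition, `μ < λ` in dominance order, and some
column of the dual of `μ` exceeds the corresponding column of the dual of `λ` by more
than one, or some row of `μ` exceeds the corresponding row of `λ` by more than one,
then `s·r(λ, μ) > c(λ, μ) + q(λ, μ)`. -/
theorem sstep_strict_inequality (n s : ℕ) (hs : 1 ≤ s) (l m : ℕ → ℕ)
    (hl : IsPartitionOf n l) (hm : IsPartitionOf n m)
    (hstep : ∀ i, l i ≤ l (i + 1) + s)
    (hdom : Dominates l m) (hne : m ≠ l)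
    (hbig : (∃ c, dualPart n l c + 1 < dualPart n m c) ∨ ∃ r, l r + 1 < m r) :
    cdiff n l m + (qdiff n l m : ℤ) < (s : ℤ) * rdiff n l m := by
  set x : ℕ → ℤ := fun i => (l i : ℤ) - m i with hx
  set g : ℕ → ℤ := fun i => (s : ℤ) * i + l i with hg
  set X : ℕ → ℤ := fun k => ∑ j ∈ Finset.range k, x j with hX
  have hXnonneg : ∀ k, 0 ≤ X k := by
    intro k
    have := hdom k
    zify at this
    simp only [hX, hx, Finset.sum_sub_distrib]
    linarith
  have hXn : X n = 0 := by
    have h1 := hl.2.2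
    have h2 := hm.2.2
    zify at h1 h2
    simp only [hX, hx, Finset.sum_sub_distrib]
    linarith
  have hgmono : ∀ i, 0 ≤ g (i + 1) - g i := by
    intro i
    have := hstep i
    zify at this
    simp only [hg]
    push_cast
    linarith
  have hparts := sum_by_parts x g n
  change _ + ∑ i ∈ Finset.range n, X (i + 1) * (g (i + 1) - g i) = X n * g n at hparts
  rw [hXn, zero_mul] at hparts
  have hr : rdiff n l m = -∑ i ∈ Finset.range n, ((i : ℤ) + 1) * x i := by
    have h1 := sum_dualPart hl
    have h2 := sum_dualPart hm
    zify at h1 h2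
    rw [rdiff, h1, h2, ← Finset.sum_sub_distrib, ← Finset.sum_neg_distrib]
    refine Finset.sum_congr rfl fun i _ => ?_
    simp only [hx]
    ring
  have hc : 2 * cdiff n l m =
      ∑ i ∈ Finset.range n, (2 * l i * x i - x i ^ 2 + x i) := by
    rw [cdiff, ← Finset.sum_sub_distrib, Finset.mul_sum]
    refine Finset.sum_congr rfl fun i _ => ?_
    rw [mul_sub, two_mul_choose_succ_two, two_mul_choose_succ_two]
    simp only [hx]
    ring
  have hq : 2 * (qdiff n l m : ℤ) ≤ ∑ i ∈ Finset.range n, |x i| := by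
    have h1 : 2 * qdiff n l m ≤ ∑ i ∈ Finset.range n, ((l i : ℤ) - (m i : ℤ)).natAbs := by
      unfold qdiff
      omega
    zify at h1
    exact h1
  have hkey : 2 * ((s : ℤ) * rdiff n l m - cdiff n l m) - ∑ i ∈ Finset.range n, |x i| =
      2 * ∑ i ∈ Finset.range n, X (i + 1) * (g (i + 1) - g i) +
        ∑ i ∈ Finset.range n, (x i ^ 2 - |x i|) := by
    have h1 : ∑ i ∈ Finset.range n, X (i + 1) * (g (i + 1) - g i) =
        -∑ i ∈ Finset.range n, x i * g i := by linarith
    have h2 : (2 * (s : ℤ) + 1) * ∑ i ∈ Finset.range n, x i = 0 := by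
      change _ * X n = 0
      rw [hXn, mul_zero]
    have h3 : ∑ i ∈ Finset.range n, (2 * (s : ℤ) * (((i : ℤ) + 1) * x i) +
          (2 * l i * x i - x i ^ 2 + x i) + |x i|) =
        ∑ i ∈ Finset.range n, (2 * (x i * g i) - (x i ^ 2 - |x i|) + (2 * (s : ℤ) + 1) * x i) := by
      refine Finset.sum_congr rfl fun i _ => ?_
      simp only [hg]
      ring
    -- `h3` is the termwise identity behind the goal; its last summand vanishes by `h2`.
    simp only [Finset.sum_add_distrib (M := ℤ), Finset.sum_sub_distrib (G := ℤ),
      ← Finset.mul_sum] at h3 h2 hc ⊢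
    rw [h1, hr]
    linarith
  have hA : ∀ i ∈ Finset.range n, 0 ≤ X (i + 1) * (g (i + 1) - g i) :=
    fun i _ => mul_nonneg (hXnonneg _) (hgmono i)
  have hB : ∀ i ∈ Finset.range n, 0 ≤ x i ^ 2 - |x i| :=
    fun i _ => sub_nonneg.mpr (abs_le_sq_int _)
  have hA0 := Finset.sum_nonneg hA
  have hB0 := Finset.sum_nonneg hB
  have hrow : ∀ r, l r + 1 < m r →
      cdiff n l m + (qdiff n l m : ℤ) < (s : ℤ) * rdiff n l m := by
    intro r hlm
    have hrn : r ∈ Finset.range n := by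
      rw [Finset.mem_range]
      by_contra hn
      have := hm.2.1 r (by omega)
      omega
    have hpos : 0 < ∑ i ∈ Finset.range n, (x i ^ 2 - |x i|) := by
      refine Finset.sum_pos' hB ⟨r, hrn, ?_⟩
      have hxr : x r ≤ -2 := by simp only [hx]; omega
      rw [abs_of_nonpos (by linarith)]
      nlinarith
    linarith
  rcases hbig with ⟨c, hcol⟩ | ⟨r, hlm⟩
  · obtain ⟨r, hrdef⟩ : ∃ r, r = dualPart n l c := ⟨_, rfl⟩
    have hmr1 : c + 1 ≤ m (r + 1) := (lt_dualPart_iff hm c _).mp (by omega)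
    have hmr : m (r + 1) ≤ m r := hm.1 (by omega)
    -- Row `r` (indexing from 0) is the first row that column `c` of `l` does not reach.
    have hlr : l r ≤ c := by
      by_contra h
      have := (lt_dualPart_iff hl c r).mpr (by omega)
      omega
    have hlr1 : l (r + 1) ≤ l r := hl.1 (by omega)
    by_cases h1 : l r + 1 < m r
    · exact hrow r h1
    by_cases h2 : l (r + 1) + 1 < m (r + 1)
    · exact hrow (r + 1) h2
    have hrn : r ∈ Finset.range n := by
      rw [Finset.mem_range]
      by_contra hn
      have := hm.2.1 r (by omega)
      omega
    have hpos : 0 < ∑ i ∈ Finset.range n, X (i + 1) * (g (i + 1) - g i) := by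
      refine Finset.sum_pos' hA ⟨r, hrn, mul_pos ?_ ?_⟩
      · have h3 : X (r + 1 + 1) = X (r + 1) + x (r + 1) := Finset.sum_range_succ x (r + 1)
        have h4 := hXnonneg (r + 1 + 1)
        have h5 : x (r + 1) ≤ -1 := by simp only [hx]; omega
        linarith
      · have h6 : l (r + 1) = l r := by omega
        simp only [hg, h6]
        push_cast
        have : (1 : ℤ) ≤ s := by exact_mod_cast hs
        linarith
    linarith
  · exact hrow r hlm
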